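/- Let κ be a regular uncountable cardinal, Γ a chain, G = (ℝ^Γ)_κ, K = ℝ((G))_κ, and ι : Γ → G^{<0} an order isomorphism. Then setting log(t^g) := Σ_{γ∈Γ} (−g_γ) t^{ι(γ)} for g = Σ_{γ∈Γ} g_γ 1_γ ∈ G defines a left logarithm on K, i.e., an isomorphism of ordered groups from (Mon(K),·,<) onto (Neg(K),+,<); moreover this left logarithm satisfies v(log t^g) = ι(min support g) for every g ∈ G^{<0}. -/

import Mathlib

open Cardinal

/-- The lexicographic (leading-coefficient) strict order on Hahn series. -/
def hlt {Γ : Type*} [LinearOrder Γ] (f g : HahnSeries Γ ℝ) : Prop :=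
  ∃ a, f.coeff a < g.coeff a ∧ ∀ b, b < a → f.coeff b = g.coeff b

/-- The lexicographic strict order on second-level series (elements of `ℝ((G))_κ`
for `G = (ℝ^Γ)_κ`, represented as real-valued functions on `G = ℝ^Γ`). -/
def hlt2 {Γ : Type*} [LinearOrder Γ] (F F' : HahnSeries Γ ℝ → ℝ) : Prop :=
  ∃ a, F a < F' a ∧ ∀ b, hlt b a → F b = F' b

/-- `Neg(K) = ℝ((G^{<0}))_κ` for `K = ℝ((G))_κ`, `G = (ℝ^Γ)_κ`. -/
def NegK (κ : Cardinal) (Γ : Type*) [LinearOrder Γ] : Set (HahnSeries Γ ℝ → ℝ) :=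
  {F | (∀ g ∈ Function.support F, #g.support < κ ∧ hlt g 0) ∧
       (Function.support F).WellFoundedOn (hlt (Γ := Γ)) ∧
       #(Function.support F) < κ}

theorem hlt_irrefl {Γ : Type*} [LinearOrder Γ] (f : HahnSeries Γ ℝ) : ¬ hlt f f :=
  fun ⟨_, ha, _⟩ => lt_irrefl _ ha

/-- **The Main Lemma: a uniform left logarithm.**  Let `κ` be regular uncountable,
`Γ` a chain, `G = (ℝ^Γ)_κ`, `K = ℝ((G))_κ`, and `ι : Γ → G^{<0}` an order isomorphism.
Then `log(t^g) := Σ_γ (−g_γ) t^{ι(γ)}` defines a left logarithm on `K`: an isomorphism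
of ordered groups from `(Mon(K), ·, <)` (monomials `t^g`, indexed by their exponents
`g ∈ G`, with `t^g·t^h = t^{g+h}` and `t^g < t^h ↔ h < g`) onto `(Neg(K), +, <)`.
Moreover `v(log t^g) = ι(min support g)` for every `g ∈ G^{<0}`. -/
theorem main_lemma_left_logarithm
    (κ : Cardinal) (hreg : κ.IsRegular) (hunc : ℵ₀ < κ)
    (Γ : Type*) [LinearOrder Γ] (ι : Γ → HahnSeries Γ ℝ)
    (hι₁ : ∀ γ, #(ι γ).support < κ ∧ hlt (ι γ) 0)
    (hι₂ : ∀ γ γ', γ < γ' ↔ hlt (ι γ) (ι γ'))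
    (hι₃ : ∀ g : HahnSeries Γ ℝ, #g.support < κ → hlt g 0 → ∃ γ, ι γ = g) :
    ∃ L : {g : HahnSeries Γ ℝ // #g.support < κ} → (HahnSeries Γ ℝ → ℝ),
      -- the defining formula log (t^g) = Σ_γ (−g_γ) t^{ι(γ)}
      (∀ g γ, L g (ι γ) = -(g.1.coeff γ)) ∧
      (∀ g h, h ∉ Set.range ι → L g h = 0) ∧
      -- well-defined, with values in Neg(K)
      (∀ g, L g ∈ NegK κ Γ) ∧
      -- bijective from Mon(K) onto Neg(K)
      Function.Injective L ∧
      (∀ F ∈ NegK κ Γ, ∃ g, L g = F) ∧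
      -- multiplication of monomials goes to addition
      (∀ g g' g'', g.1 + g'.1 = g''.1 → ∀ h, L g'' h = L g h + L g' h) ∧
      -- order preserving (recall t^g < t^{g'} iff g' < g)
      (∀ g g', hlt g'.1 g.1 ↔ hlt2 (L g) (L g')) ∧
      -- v(log t^g) = ι(min support g) for g ∈ G^{<0}
      (∀ g : {g : HahnSeries Γ ℝ // #g.support < κ}, hlt g.1 0 →
        ∀ γ₀, g.1.coeff γ₀ ≠ 0 → (∀ γ, g.1.coeff γ ≠ 0 → γ₀ ≤ γ) →
          (L g (ι γ₀) ≠ 0 ∧ ∀ h, L g h ≠ 0 → h = ι γ₀ ∨ hlt (ι γ₀) h)) := by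
  have hinj : Function.Injective ι := by
    intro a b hab
    by_contra hne
    rcases lt_or_gt_of_ne hne with h | h
    · exact hlt_irrefl _ (hab ▸ (hι₂ a b).1 h)
    · exact hlt_irrefl _ (hab ▸ (hι₂ b a).1 h)
  let L : {g : HahnSeries Γ ℝ // #g.support < κ} → (HahnSeries Γ ℝ → ℝ) :=
    fun g => Function.extend ι (fun γ => -(g.1.coeff γ)) 0
  have hL : ∀ g γ, L g (ι γ) = -(g.1.coeff γ) := fun g γ => hinj.extend_apply _ _ γ
  have hL0 : ∀ g h, h ∉ Set.range ι → L g h = 0 := fun g h hh =>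
    Function.extend_apply' _ _ _ hh
  have hrange : ∀ g h, L g h ≠ 0 → h ∈ Set.range ι := fun g h hh => by
    by_contra hn
    exact hh (hL0 g h hn)
  have hsupp : ∀ g, Function.support (L g) = ι '' g.1.support := by
    intro g
    ext h
    constructor
    · intro hh
      obtain ⟨γ, rfl⟩ := hrange g h hh
      exact ⟨γ, by simpa [hL] using hh, rfl⟩
    · rintro ⟨γ, hγ, rfl⟩
      simpa [hL] using hγ
  have honFun : Function.onFun hlt ι = fun γ γ' => γ < γ' := by
    ext γ γ'
    exact (hι₂ γ γ').symm
  refine ⟨L, hL, hL0, ?_, ?_, ?_, ?_, ?_, ?_⟩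
  · intro g
    refine ⟨?_, ?_, ?_⟩
    · intro h hh
      obtain ⟨γ, rfl⟩ := hrange g h hh
      exact hι₁ γ
    · rw [hsupp, Set.wellFoundedOn_image, honFun]
      exact g.1.isWF_support
    · rw [hsupp]
      exact mk_image_le.trans_lt g.2
  · intro g g' hgg
    ext γ
    have := congrFun hgg (ι γ)
    rw [hL, hL] at this
    exact neg_injective this
  · rintro F ⟨hF₁, hF₂, hF₃⟩
    have hsF : Function.support (fun γ => -F (ι γ)) = ι ⁻¹' Function.support F := by
      ext γ
      simp
    have hwf : (Function.support fun γ => -F (ι γ)).IsPWO := by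
      rw [hsF, Set.isPWO_iff_isWF, Set.IsWF, ← honFun, ← Set.wellFoundedOn_image]
      exact hF₂.subset (Set.image_preimage_subset _ _)
    have hcard : #(Function.support fun γ => -F (ι γ)) < κ := by
      rw [hsF]
      exact (mk_preimage_of_injective ι _ hinj).trans_lt hF₃
    refine ⟨⟨⟨fun γ => -F (ι γ), hwf⟩, hcard⟩, ?_⟩
    funext h
    by_cases hh : h ∈ Set.range ι
    · obtain ⟨γ, rfl⟩ := hh
      rw [hL]
      exact neg_neg _
    · rw [hL0 _ _ hh]
      by_contra hne
      obtain ⟨hc, hneg⟩ := hF₁ h (Ne.symm hne)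
      exact hh (hι₃ h hc hneg)
  · intro g g' g'' hg h
    by_cases hh : h ∈ Set.range ι
    · obtain ⟨γ, rfl⟩ := hh
      rw [hL, hL, hL, ← hg, HahnSeries.coeff_add, neg_add]
    · rw [hL0 _ _ hh, hL0 _ _ hh, hL0 _ _ hh, add_zero]
  · intro g g'
    constructor
    · rintro ⟨a, ha, hb⟩
      refine ⟨ι a, by rw [hL, hL]; exact neg_lt_neg ha, fun h hlt_h => ?_⟩
      by_cases hh : h ∈ Set.range ι
      · obtain ⟨γ, rfl⟩ := hh
        rw [hL, hL, hb γ ((hι₂ _ _).2 hlt_h)]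
      · rw [hL0 _ _ hh, hL0 _ _ hh]
    · rintro ⟨h, ha, hb⟩
      by_cases hh : h ∈ Set.range ι
      · obtain ⟨γ, rfl⟩ := hh
        rw [hL, hL] at ha
        refine ⟨γ, neg_lt_neg_iff.1 ha, fun b hbγ => ?_⟩
        have := hb (ι b) ((hι₂ _ _).1 hbγ)
        rw [hL, hL] at this
        exact (neg_injective this).symm
      · rw [hL0 _ _ hh, hL0 _ _ hh] at ha
        exact absurd ha (lt_irrefl _)
  · intro g _ γ₀ hγ₀ hmin
    refine ⟨by rw [hL]; exact neg_ne_zero.2 hγ₀, fun h hh => ?_⟩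
    obtain ⟨γ, rfl⟩ := hrange g h hh
    rw [hL] at hh
    rcases (hmin γ (neg_ne_zero.1 hh)).eq_or_lt with rfl | hlt_γ
    · exact Or.inl rfl
    · exact Or.inr ((hι₂ _ _).1 hlt_γ)
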